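/- Let A, B ∈ ℂ^{m×n}, and let X ∈ ℂ^{n×m} be the Moore–Penrose inverse of A. Then the following are equivalent: (a) A *≤ B; (b) A ≤⋄ B and A*A = A*B; (c) A ≤⋄ B and XA = XB; (d) A ≤⋄ B and A*B is Hermitian (i.e., (A*B)* = A*B). -/

import Mathlib

open Matrix

noncomputable section

/-- Column space of a complex matrix: the range of `x ↦ M x`. -/
def colSpace {m n : ℕ} (M : Matrix (Fin m) (Fin n) ℂ) : Submodule ℂ (Fin m → ℂ) :=
  LinearMap.range M.mulVecLin

/-- `X` is the Moore–Penrose inverse of `M`. -/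
def IsMP {m n : ℕ} (M : Matrix (Fin m) (Fin n) ℂ) (X : Matrix (Fin n) (Fin m) ℂ) : Prop :=
  M * X * M = M ∧ X * M * X = X ∧ (M * X)ᴴ = M * X ∧ (X * M)ᴴ = X * M

/-- Diamond partial order: `R(A) ⊆ R(B)`, `R(A*) ⊆ R(B*)` and `A B* A = A A* A`. -/
def diamondLE {m n : ℕ} (A B : Matrix (Fin m) (Fin n) ℂ) : Prop :=
  colSpace A ≤ colSpace B ∧ colSpace Aᴴ ≤ colSpace Bᴴ ∧ A * Bᴴ * A = A * Aᴴ * A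

/-- Star partial order: `A* A = A* B` and `A A* = B A*`. -/
def starLE {m n : ℕ} (A B : Matrix (Fin m) (Fin n) ℂ) : Prop :=
  Aᴴ * A = Aᴴ * B ∧ A * Aᴴ = B * Aᴴ

/-- Minus partial order: there is an inner inverse `G` of `A` with `G A = G B` and `A G = B G`. -/
def minusLE {m n : ℕ} (A B : Matrix (Fin m) (Fin n) ℂ) : Prop :=
  ∃ G : Matrix (Fin n) (Fin m) ℂ, A * G * A = A ∧ G * A = G * B ∧ A * G = B * G

/-- Space pre-order: `R(A) ⊆ R(B)` and `R(A*) ⊆ R(B*)`. -/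
def spaceLE {m n : ℕ} (A B : Matrix (Fin m) (Fin n) ℂ) : Prop :=
  colSpace A ≤ colSpace B ∧ colSpace Aᴴ ≤ colSpace Bᴴ

/-- Left star partial order: `A* A = A* B` and `R(A) ⊆ R(B)`. -/
def leftStarLE {m n : ℕ} (A B : Matrix (Fin m) (Fin n) ℂ) : Prop :=
  Aᴴ * A = Aᴴ * B ∧ colSpace A ≤ colSpace B

/-- Right star partial order: `A A* = B A*` and `R(A*) ⊆ R(B*)`. -/
def rightStarLE {m n : ℕ} (A B : Matrix (Fin m) (Fin n) ℂ) : Prop :=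
  A * Aᴴ = B * Aᴴ ∧ colSpace Aᴴ ≤ colSpace Bᴴ

/-- The canonical equivalence `Fin r ⊕ Fin (n - r) ≃ Fin n` when `r ≤ n`. -/
def finPairEquiv {r n : ℕ} (h : r ≤ n) : Fin r ⊕ Fin (n - r) ≃ Fin n :=
  finSumFinEquiv.trans (finCongr (Nat.add_sub_cancel' h))

/-- The canonical equivalence `(Fin t ⊕ Fin (r - t)) ⊕ Fin (m - r) ≃ Fin m`
when `t ≤ r ≤ m`. -/
def finTriEquiv {t r m : ℕ} (ht : t ≤ r) (hr : r ≤ m) :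
    (Fin t ⊕ Fin (r - t)) ⊕ Fin (m - r) ≃ Fin m :=
  (Equiv.sumCongr (finPairEquiv ht) (Equiv.refl (Fin (m - r)))).trans (finPairEquiv hr)

/-!
If `A` has a Moore–Penrose inverse `X`, then `A* = A*AX = XAA*` and `X = XX*A*`. When `A *≤ B`, the
identity `A*A = B*A` turns `A* = A*AX` into `A* = B*AX`, whence `R(A*) ⊆ R(B*)`. Since `A*` and `X`
are left multiples of each other, `A*A = A*B` is equivalent to `XA = XB`. Finally, `A* = XAA*`
cancels the factor `A` from `AA*A = AA*B`, to which `AA*A = AB*A` reduces when `A*B` is Hermitian.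
-/

section NonUnitalSemiring

variable {m n R : Type*} [Fintype m] [Fintype n] [NonUnitalSemiring R] [StarRing R]

/-- `X` is a Moore–Penrose inverse of the matrix `A` over a star semiring: the four Penrose
equations. Existence is not automatic over a general `R`, so this is a predicate on `X`. -/
structure IsMoorePenroseInverse (A : Matrix m n R) (X : Matrix n m R) : Prop where
  mul_inv_mul : A * X * A = A
  inv_mul_inv : X * A * X = X
  isHermitian_mul_inv : (A * X).IsHermitian
  isHermitian_inv_mul : (X * A).IsHermitian

namespace IsMoorePenroseInverse

variable {A : Matrix m n R} {X : Matrix n m R}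

theorem conjTranspose_mul_self_mul_inv (hX : IsMoorePenroseInverse A X) : Aᴴ * A * X = Aᴴ :=
  calc
    Aᴴ * A * X = Aᴴ * (A * X)ᴴ := by rw [hX.isHermitian_mul_inv.eq, Matrix.mul_assoc]
    _ = Aᴴ := by rw [← conjTranspose_mul, hX.mul_inv_mul]

theorem inv_mul_self_mul_conjTranspose (hX : IsMoorePenroseInverse A X) : X * A * Aᴴ = Aᴴ :=
  calc
    X * A * Aᴴ = (X * A)ᴴ * Aᴴ := by rw [hX.isHermitian_inv_mul.eq]
    _ = Aᴴ := by rw [← conjTranspose_mul, ← Matrix.mul_assoc, hX.mul_inv_mul]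

theorem inv_mul_conjTranspose_inv_mul_conjTranspose (hX : IsMoorePenroseInverse A X) :
    X * Xᴴ * Aᴴ = X :=
  calc
    X * Xᴴ * Aᴴ = X * (A * X)ᴴ := by rw [conjTranspose_mul, Matrix.mul_assoc]
    _ = X := by rw [hX.isHermitian_mul_inv.eq, ← Matrix.mul_assoc, hX.inv_mul_inv]

theorem conjTranspose_mul_eq_iff_inv_mul_eq (hX : IsMoorePenroseInverse A X) {l : Type*}
    {C D : Matrix m l R} : Aᴴ * C = Aᴴ * D ↔ X * C = X * D where
  mp h := by
    rw [← hX.inv_mul_conjTranspose_inv_mul_conjTranspose, Matrix.mul_assoc, h, ← Matrix.mul_assoc]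
  mpr h := by
    rw [← hX.conjTranspose_mul_self_mul_inv, Matrix.mul_assoc, h, ← Matrix.mul_assoc]

theorem conjTranspose_mul_cancel (hX : IsMoorePenroseInverse A X) {l : Type*}
    {C D : Matrix m l R} (h : A * (Aᴴ * C) = A * (Aᴴ * D)) : Aᴴ * C = Aᴴ * D := by
  simpa only [← Matrix.mul_assoc, hX.inv_mul_self_mul_conjTranspose] using congrArg (X * ·) h

end IsMoorePenroseInverse

end NonUnitalSemiring

theorem range_mulVecLin_mul_le {l m n R : Type*} [Fintype m] [Fintype n] [CommSemiring R]
    (A : Matrix l m R) (B : Matrix m n R) :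
    LinearMap.range (A * B).mulVecLin ≤ LinearMap.range A.mulVecLin := by
  rw [mulVecLin_mul]
  exact LinearMap.range_comp_le_range _ _

section CommSemiring

variable {m n R : Type*} [Fintype m] [Fintype n] [CommSemiring R] [StarRing R]

/-- The left star relation `A *≤ B` for matrices over a commutative star semiring, the column space
being the range of `mulVecLin`. It specializes definitionally to `leftStarLE` over `ℂ`. -/
def IsLeftStarLE (A B : Matrix m n R) : Prop :=
  Aᴴ * A = Aᴴ * B ∧ LinearMap.range A.mulVecLin ≤ LinearMap.range B.mulVecLin

/-- The diamond relation `A ≤⋄ B` for matrices over a commutative star semiring, the column space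
being the range of `mulVecLin`. It specializes definitionally to `diamondLE` over `ℂ`. -/
def IsDiamondLE (A B : Matrix m n R) : Prop :=
  LinearMap.range A.mulVecLin ≤ LinearMap.range B.mulVecLin ∧
    LinearMap.range Aᴴ.mulVecLin ≤ LinearMap.range Bᴴ.mulVecLin ∧ A * Bᴴ * A = A * Aᴴ * A

variable {A B : Matrix m n R} {X : Matrix n m R}

theorem IsLeftStarLE.conjTranspose_mul_eq (h : IsLeftStarLE A B) : Bᴴ * A = Aᴴ * A := by
  simpa only [conjTranspose_mul, conjTranspose_conjTranspose] using congrArg conjTranspose h.1.symm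

theorem IsLeftStarLE.isDiamondLE (h : IsLeftStarLE A B) (hX : IsMoorePenroseInverse A X) :
    IsDiamondLE A B := by
  have conjTranspose_eq : Aᴴ = Bᴴ * (A * X) := by
    rw [← Matrix.mul_assoc, h.conjTranspose_mul_eq, hX.conjTranspose_mul_self_mul_inv]
  refine ⟨h.2, ?_, ?_⟩
  · rw [conjTranspose_eq]
    exact range_mulVecLin_mul_le Bᴴ (A * X)
  · rw [Matrix.mul_assoc, h.conjTranspose_mul_eq, ← Matrix.mul_assoc]

theorem isLeftStarLE_iff_isDiamondLE_and_conjTranspose_mul_eq (hX : IsMoorePenroseInverse A X) :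
    IsLeftStarLE A B ↔ IsDiamondLE A B ∧ Aᴴ * A = Aᴴ * B :=
  ⟨fun h => ⟨h.isDiamondLE hX, h.1⟩, fun ⟨hAB, h⟩ => ⟨h, hAB.1⟩⟩

theorem IsDiamondLE.conjTranspose_mul_eq_iff_isHermitian (h : IsDiamondLE A B)
    (hX : IsMoorePenroseInverse A X) : Aᴴ * A = Aᴴ * B ↔ (Aᴴ * B).IsHermitian := by
  refine ⟨fun hAB => hAB ▸ isHermitian_conjTranspose_mul_self A, fun hAB => ?_⟩
  have conjTranspose_mul_comm : Bᴴ * A = Aᴴ * B := by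
    simpa only [conjTranspose_mul, conjTranspose_conjTranspose] using hAB.eq
  apply hX.conjTranspose_mul_cancel
  calc
    A * (Aᴴ * A) = A * (Bᴴ * A) := by rw [← Matrix.mul_assoc, ← h.2.2, Matrix.mul_assoc]
    _ = A * (Aᴴ * B) := by rw [conjTranspose_mul_comm]

theorem left_star_iff_diamond_general (hX : IsMoorePenroseInverse A X) :
    (IsLeftStarLE A B ↔ IsDiamondLE A B ∧ Aᴴ * A = Aᴴ * B) ∧
    (IsLeftStarLE A B ↔ IsDiamondLE A B ∧ X * A = X * B) ∧
    (IsLeftStarLE A B ↔ IsDiamondLE A B ∧ (Aᴴ * B).IsHermitian) := by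
  have h := isLeftStarLE_iff_isDiamondLE_and_conjTranspose_mul_eq (B := B) hX
  exact ⟨h, h.trans (and_congr_right fun _ => hX.conjTranspose_mul_eq_iff_inv_mul_eq),
    h.trans (and_congr_right fun hAB => hAB.conjTranspose_mul_eq_iff_isHermitian hX)⟩

end CommSemiring

theorem left_star_iff_diamond {m n : ℕ} (A B : Matrix (Fin m) (Fin n) ℂ)
    (X : Matrix (Fin n) (Fin m) ℂ) (hX : IsMP A X) :
    (leftStarLE A B ↔ (diamondLE A B ∧ Aᴴ * A = Aᴴ * B)) ∧
    (leftStarLE A B ↔ (diamondLE A B ∧ X * A = X * B)) ∧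
    (leftStarLE A B ↔ (diamondLE A B ∧ (Aᴴ * B)ᴴ = Aᴴ * B)) :=
  left_star_iff_diamond_general ⟨hX.1, hX.2.1, hX.2.2.1, hX.2.2.2⟩
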